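/- (Lemma 4.3) Fix an integer d ≥ 1, m > 0 and x, y ∈ ℝ^d with x ≠ y. The family of finite measures {W_{x,y,a} : 0 < a < 1} on Γ̃(x,y) is tight: for every η > 0 there exists a compact set K ⊆ Γ̃(x,y) such that W_{x,y,a}(Γ̃(x,y) ∖ K) < η for all 0 < a < 1. -/

import Mathlib

open MeasureTheory Filter Topology Real Set
open scoped RealInnerProductSpace ENNReal unitInterval

noncomputable section

/-- `ℝ^d` as a Euclidean space. -/
abbrev Ed (d : ℕ) := EuclideanSpace ℝ (Fin d)

/-- The space of continuous paths `[0,1] → ℝ^d`, with the uniform metric. -/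
abbrev PathSp (d : ℕ) := C(unitInterval, Ed d)

instance (d : ℕ) : MeasurableSpace (PathSp d) := borel _
instance (d : ℕ) : BorelSpace (PathSp d) := ⟨rfl⟩

/-- Evaluation of a path at a real time, clamped to `[0,1]`. -/
def evalAt {d : ℕ} (ω : PathSp d) (t : ℝ) : Ed d := ω (Set.projIcc 0 1 zero_le_one t)

/-- `Ω(x)`: continuous paths starting at `x`. -/
abbrev Omega1 {d : ℕ} (x : Ed d) := {ω : PathSp d // ω 0 = x}

/-- `Ω(x,y)`: continuous paths from `x` to `y`. -/
abbrev Omega2 {d : ℕ} (x y : Ed d) := {ω : PathSp d // ω 0 = x ∧ ω 1 = y}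

/-- clamp a real number to `[0,1]`. -/
def clamp01 (r : ℝ) : ℝ := min 1 (max 0 r)

lemma clamp01_of_nonpos {r : ℝ} (h : r ≤ 0) : clamp01 r = 0 := by
  rw [clamp01, max_eq_left h, min_eq_right zero_le_one]

lemma clamp01_of_one_le {r : ℝ} (h : 1 ≤ r) : clamp01 r = 1 := by
  rw [clamp01, max_eq_right (zero_le_one.trans h), min_eq_left h]

lemma clamp01_continuous : Continuous clamp01 :=
  continuous_const.min (continuous_const.max continuous_id)

/-- The piecewise linear path starting at `x` with `N` steps given by the increments `v i`,
the `i`-th step being linearly parametrized by `[i/N, (i+1)/N]`. -/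
def pwLinE {d : ℕ} (x : Ed d) (N : ℕ) (v : Fin N → Ed d) : PathSp d :=
  ⟨fun t => x + ∑ i : Fin N, clamp01 ((N : ℝ) * (t : ℝ) - ((i : ℕ) : ℝ)) • v i, by
    refine continuous_const.add (continuous_finset_sum _ fun i _ => ?_)
    exact ((clamp01_continuous.comp
      ((continuous_const.mul continuous_subtype_val).sub continuous_const)).smul
      continuous_const)⟩

lemma pwLinE_zero {d : ℕ} (x : Ed d) (N : ℕ) (v : Fin N → Ed d) :
    pwLinE x N v 0 = x := by
  show x + ∑ i : Fin N, clamp01 ((N : ℝ) * ((0 : unitInterval) : ℝ) - ((i : ℕ) : ℝ)) • v i = x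
  have h : ∀ i : Fin N, clamp01 ((N : ℝ) * ((0 : unitInterval) : ℝ) - ((i : ℕ) : ℝ)) = 0 := by
    intro i
    apply clamp01_of_nonpos
    have h0 : ((0 : unitInterval) : ℝ) = 0 := rfl
    rw [h0, mul_zero, zero_sub]
    exact neg_nonpos.mpr (Nat.cast_nonneg (i : ℕ))
  simp only [h, zero_smul, Finset.sum_const_zero, add_zero]

lemma pwLinE_one {d : ℕ} (x : Ed d) (N : ℕ) (v : Fin N → Ed d) :
    pwLinE x N v 1 = x + ∑ i : Fin N, v i := by
  show x + ∑ i : Fin N, clamp01 ((N : ℝ) * ((1 : unitInterval) : ℝ) - ((i : ℕ) : ℝ)) • v i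
      = x + ∑ i : Fin N, v i
  have h : ∀ i : Fin N, clamp01 ((N : ℝ) * ((1 : unitInterval) : ℝ) - ((i : ℕ) : ℝ)) = 1 := by
    intro i
    apply clamp01_of_one_le
    have h1 : ((1 : unitInterval) : ℝ) = 1 := rfl
    have h2 : ((i : ℕ) : ℝ) + 1 ≤ (N : ℝ) := by
      exact_mod_cast Nat.succ_le_of_lt i.isLt
    rw [h1, mul_one]; linarith
  simp only [h, one_smul]

/-- Piecewise linear element of `Ω(x)` with increments `v`. -/
def pwLin1 {d : ℕ} (x : Ed d) (N : ℕ) (v : Fin N → Ed d) : Omega1 x :=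
  ⟨pwLinE x N v, pwLinE_zero x N v⟩

/-- Piecewise linear element of `Ω(x,y)` with increments `v` summing to `y - x`. -/
def pwLin2 {d : ℕ} (x y : Ed d) (N : ℕ) (v : Fin N → Ed d)
    (h : x + ∑ i : Fin N, v i = y) : Omega2 x y :=
  ⟨pwLinE x N v, pwLinE_zero x N v, by rw [pwLinE_one, h]⟩

/-- the point preceding `x_i` in the list `x, x_1, …, x_N`. -/
def prevPt {d : ℕ} (x : Ed d) {N : ℕ} (xs : Fin N → Ed d) (i : Fin N) : Ed d :=
  if (i : ℕ) = 0 then x else xs ⟨(i : ℕ) - 1, lt_of_le_of_lt (Nat.pred_le _) i.isLt⟩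

/-- The discrete measure `W_{x,a,N}`, i.e. the measure
`∏_{i=1}^N (2πa²)^{-d/2} exp(-|x_i - x_{i-1}|²/(2a²)) dx_1 … dx_N` (with `x_0 = x`)
on `N`-step piecewise linear paths, placed on `{a²N} × Ω(x) ⊆ ℝ × Ω(x)`.
For `N = 0` this is the Dirac measure at `(0, constant path at x)`. -/
def WxaN {d : ℕ} (x : Ed d) (a : ℝ) (N : ℕ) : Measure (ℝ × Omega1 x) :=
  Measure.map
    (fun xs : Fin N → Ed d =>
      ((a ^ 2 * N : ℝ), pwLin1 x N fun i => xs i - prevPt x xs i))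
    (volume.withDensity fun xs : Fin N → Ed d =>
      ENNReal.ofReal (∏ i : Fin N,
        (2 * π * a ^ 2) ^ (-(d : ℝ) / 2) *
          Real.exp (-‖xs i - prevPt x xs i‖ ^ 2 / (2 * a ^ 2))))

/-- The approximating probability measure
`W_{x,a} = (1 - e^{-m²a²/2}) Σ_{N=0}^∞ e^{-m²a²N/2} W_{x,a,N}`. -/
def Wxa {d : ℕ} (x : Ed d) (m a : ℝ) : Measure (ℝ × Omega1 x) :=
  ENNReal.ofReal (1 - Real.exp (-m ^ 2 * a ^ 2 / 2)) •
    Measure.sum fun N : ℕ =>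
      ENNReal.ofReal (Real.exp (-m ^ 2 * a ^ 2 * N / 2)) • WxaN x a N

/-- The lattice step of length `a` in direction `p.1`, forwards or backwards
according to `p.2`. -/
def stepVec {d : ℕ} (a : ℝ) (p : Fin d × Bool) : Ed d :=
  (if p.2 then a else -a) • EuclideanSpace.single p.1 (1 : ℝ)

/-- The normalized counting measure `V'_{x,a,N}` giving mass `(2d)^{-N}` to each
(piecewise linearly parametrized) `N`-step nearest-neighbour lattice path in `x + aℤ^d`
starting at `x`.  For `N = 0` it is the Dirac measure at the constant path. -/
def VxaN {d : ℕ} (x : Ed d) (a : ℝ) (N : ℕ) : Measure (Omega1 x) :=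
  Measure.sum fun s : Fin N → Fin d × Bool =>
    (((2 * d : ℕ) : ℝ≥0∞) ^ N)⁻¹ •
      Measure.dirac (pwLin1 x N fun i => stepVec a (s i))

/-- The approximating probability measure
`V'_{x,a} = (1 - e^{-m²a²/(2d)}) Σ_{N=0}^∞ e^{-m²a²N/(2d)} V'_{x,a,N}`. -/
def Vxa {d : ℕ} (x : Ed d) (m a : ℝ) : Measure (Omega1 x) :=
  ENNReal.ofReal (1 - Real.exp (-m ^ 2 * a ^ 2 / (2 * d))) •
    Measure.sum fun N : ℕ =>
      ENNReal.ofReal (Real.exp (-m ^ 2 * a ^ 2 * N / (2 * d))) • VxaN x a N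

/-- `Wt` is the family of Wiener measures `(W_x^t)_{t>0}` on `Ω(x)`:
each `W_x^t` is a Borel probability measure, characterized by the characteristic
functions of its finite dimensional distributions
`∫ exp(i Σ_j ξ_j·ω(t_j)) dW_x^t = exp(-(t/2) Σ_j (t_j - t_{j-1}) |ξ_j + ⋯ + ξ_n|²
+ i x·(ξ_1 + ⋯ + ξ_n))` for all `0 = t_0 < t_1 < ⋯ < t_n ≤ 1`. -/
def IsWienerFamily {d : ℕ} (x : Ed d) (Wt : ℝ → Measure (Omega1 x)) : Prop :=
  ∀ t : ℝ, 0 < t → (IsProbabilityMeasure (Wt t) ∧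
    ∀ (n : ℕ) (ts : ℕ → ℝ), ts 0 = 0 → (∀ i < n, ts i < ts (i + 1)) → ts n ≤ 1 →
      ∀ ξ : Fin n → Ed d,
        (∫ ω : Omega1 x, Complex.exp (Complex.I *
            ((∑ i : Fin n, ⟪ξ i, evalAt ω.1 (ts ((i : ℕ) + 1))⟫ : ℝ) : ℂ)) ∂(Wt t))
          = Complex.exp
              (((-(t / 2) * ∑ i : Fin n,
                  (ts ((i : ℕ) + 1) - ts (i : ℕ)) * ‖∑ j ∈ Finset.Ici i, ξ j‖ ^ 2 : ℝ) : ℂ)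
                + Complex.I * ((⟪∑ j, ξ j, x⟫ : ℝ) : ℂ)))


/-- the sequence of points `x, vs 0, …, vs (N-1), y` (with value `y` from index `N+1` on). -/
def pinPts {d : ℕ} (x y : Ed d) {N : ℕ} (vs : Fin N → Ed d) (j : ℕ) : Ed d :=
  if h0 : j = 0 then x else if h : j ≤ N then vs ⟨j - 1, by omega⟩ else y

lemma pinPts_zero {d : ℕ} (x y : Ed d) {N : ℕ} (vs : Fin N → Ed d) :
    pinPts x y vs 0 = x := by simp [pinPts]

lemma pinPts_last {d : ℕ} (x y : Ed d) {N : ℕ} (vs : Fin N → Ed d) :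
    pinPts x y vs (N + 1) = y := by
  have h1 : ¬(N + 1 = 0) := Nat.succ_ne_zero N
  have h2 : ¬(N + 1 ≤ N) := by omega
  simp [pinPts, h1, h2]

lemma pin_telescope {d : ℕ} (x y : Ed d) {N : ℕ} (vs : Fin N → Ed d) :
    x + ∑ i : Fin (N + 1), (pinPts x y vs ((i : ℕ) + 1) - pinPts x y vs (i : ℕ)) = y := by
  rw [Fin.sum_univ_eq_sum_range (fun j => pinPts x y vs (j + 1) - pinPts x y vs j) (N + 1)]
  rw [Finset.sum_range_sub (fun j => pinPts x y vs j) (N + 1)]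
  rw [pinPts_zero, pinPts_last]
  abel

/-- The discrete measure `W_{x,y,a,N+1}`, i.e. the measure
`∏_{i=1}^{N+1} (2πa²)^{-d/2} exp(-|x_i - x_{i-1}|²/(2a²)) dx_1 … dx_N`
(with `x_0 = x`, `x_{N+1} = y`) on `(N+1)`-step piecewise linear paths from `x` to `y`,
placed on `{a²(N+1)} × Ω(x,y) ⊆ ℝ × Ω(x,y)`.  For `N = 0` this is the point mass of
weight `(2πa²)^{-d/2} e^{-|x-y|²/(2a²)}` at `(a², linear path from x to y)`. -/
def WxyaN {d : ℕ} (x y : Ed d) (a : ℝ) (N : ℕ) : Measure (ℝ × Omega2 x y) :=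
  Measure.map
    (fun vs : Fin N → Ed d =>
      ((a ^ 2 * (N + 1) : ℝ),
        pwLin2 x y (N + 1) (fun i => pinPts x y vs ((i : ℕ) + 1) - pinPts x y vs (i : ℕ))
          (pin_telescope x y vs)))
    (volume.withDensity fun vs : Fin N → Ed d =>
      ENNReal.ofReal (∏ i : Fin (N + 1),
        (2 * π * a ^ 2) ^ (-(d : ℝ) / 2) *
          Real.exp (-‖pinPts x y vs ((i : ℕ) + 1) - pinPts x y vs (i : ℕ)‖ ^ 2 /
            (2 * a ^ 2))))

/-- The approximating measure
`W_{x,y,a} = (1 - e^{-m²a²/2}) Σ_{N=1}^∞ e^{-m²a²N/2} W_{x,y,a,N}`. -/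
def Wxya {d : ℕ} (x y : Ed d) (m a : ℝ) : Measure (ℝ × Omega2 x y) :=
  ENNReal.ofReal (1 - Real.exp (-m ^ 2 * a ^ 2 / 2)) •
    Measure.sum fun N : ℕ =>
      ENNReal.ofReal (Real.exp (-m ^ 2 * a ^ 2 * (N + 1) / 2)) • WxyaN x y a N

/-- The measure `V'_{x,y,a,N}` giving mass `a^{-d} (2d)^{-N}` to each
(piecewise linearly parametrized) `N`-step nearest-neighbour lattice path
in `x + aℤ^d` from `x` to `y`. -/
def VxyaN {d : ℕ} (x y : Ed d) (a : ℝ) (N : ℕ) : Measure (Omega2 x y) :=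
  Measure.sum fun s : {s : Fin N → Fin d × Bool // x + ∑ i, stepVec a (s i) = y} =>
    (ENNReal.ofReal (a ^ (-(d : ℝ))) * (((2 * d : ℕ) : ℝ≥0∞) ^ N)⁻¹) •
      Measure.dirac (pwLin2 x y N (fun i => stepVec a (s.1 i)) s.2)

/-- The approximating measure
`V'_{x,y,a} = (1 - e^{-m²a²/(2d)}) Σ_{N=1}^∞ e^{-m²a²N/(2d)} V'_{x,y,a,N}`. -/
def Vxya {d : ℕ} (x y : Ed d) (m a : ℝ) : Measure (Omega2 x y) :=
  ENNReal.ofReal (1 - Real.exp (-m ^ 2 * a ^ 2 / (2 * d))) •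
    Measure.sum fun N : ℕ =>
      ENNReal.ofReal (Real.exp (-m ^ 2 * a ^ 2 * (N + 1) / (2 * d))) • VxyaN x y a (N + 1)

/-- `Wt` is the family of pinned Wiener measures `(W_{x,y}^t)_{t>0}` on `Ω(x,y)`:
finite Borel measures characterized by the characteristic functions of their finite
dimensional distributions: for `0 = t_0 < t_1 < ⋯ < t_n < 1`, with `η_i = ξ_i + ⋯ + ξ_n`,
`∫ exp(i Σ_j ξ_j·ω(t_j)) dW_{x,y}^t = (2πt)^{-d/2} e^{-|x-y|²/(2t)} ·
exp(-(t/2)(Σ_j (t_j - t_{j-1})|η_j|² - |Σ_j t_j ξ_j|²) + i Σ_j ((1-t_j)x + t_j y)·ξ_j)`;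
in particular (`n = 0`) the total mass is the heat kernel `(2πt)^{-d/2} e^{-|x-y|²/(2t)}`. -/
def IsPinnedWienerFamily {d : ℕ} (x y : Ed d) (Wt : ℝ → Measure (Omega2 x y)) : Prop :=
  ∀ t : ℝ, 0 < t → (IsFiniteMeasure (Wt t) ∧
    ∀ (n : ℕ) (ts : ℕ → ℝ), ts 0 = 0 → (∀ i < n, ts i < ts (i + 1)) → ts n < 1 →
      ∀ ξ : Fin n → Ed d,
        (∫ ω : Omega2 x y, Complex.exp (Complex.I *
            ((∑ i : Fin n, ⟪ξ i, evalAt ω.1 (ts ((i : ℕ) + 1))⟫ : ℝ) : ℂ)) ∂(Wt t))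
          = (((2 * π * t) ^ (-(d : ℝ) / 2) * Real.exp (-‖x - y‖ ^ 2 / (2 * t)) : ℝ) : ℂ) *
            Complex.exp
              (((-(t / 2) *
                  ((∑ i : Fin n,
                      (ts ((i : ℕ) + 1) - ts (i : ℕ)) * ‖∑ j ∈ Finset.Ici i, ξ j‖ ^ 2)
                    - ‖∑ i : Fin n, ts ((i : ℕ) + 1) • ξ i‖ ^ 2) : ℝ) : ℂ)
                + Complex.I *
                  ((∑ i : Fin n,
                    ⟪ξ i, (1 - ts ((i : ℕ) + 1)) • x + ts ((i : ℕ) + 1) • y⟫ : ℝ) : ℂ)))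


/-! Each `W_{x,y,a}` is a mixture, with total weight at most `1`, of the measures `W_{x,y,a,N}`, so
it suffices that the latter form a tight family over all `a` and `N`. The mass of `W_{x,y,a,N}` is
the heat kernel at time `T = a²N` and displacement `y - x ≠ 0`. It vanishes as `T → 0` and as
`T → ∞`, so only times in a compact subinterval of `(0, ∞)` matter. For such times, the exponential
tilt `exp ⟪ξ, ω t - ω s⟫` shifts the mean of every Gaussian step, which bounds the exponential
moments of an increment by those of a Gaussian of variance `T |t - s|`. Hence its fourth moment is
at most a constant times `|t - s|²`, uniformly in `a` and `N`, and Kolmogorov's criterion (dyadic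
chaining and Arzelà–Ascoli) gives tightness of the path marginals. -/

section Tightness

variable {X Y ι : Type*} [MeasurableSpace X] [TopologicalSpace X] [MeasurableSpace Y]
  [TopologicalSpace Y] {S : Set (Measure X)}

lemma isTightMeasureSet_of_forall_ae_mem {K : Set X} (hK : IsCompact K)
    (hS : ∀ μ ∈ S, ∀ᵐ x ∂μ, x ∈ K) : IsTightMeasureSet S :=
  isTightMeasureSet_iff_exists_isCompact_measure_compl_le.2 fun _ _ =>
    ⟨K, hK, fun μ hμ => (measure_eq_zero_iff_ae_notMem.2 <| by simpa using hS μ hμ).trans_le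
      zero_le⟩

lemma isTightMeasureSet_of_forall_exists_subset
    (hS : ∀ ε, 0 < ε → ∃ T : Set (Measure X), IsTightMeasureSet T ∧
      ∀ μ ∈ S, μ ∈ T ∨ μ univ ≤ ε) : IsTightMeasureSet S := by
  refine isTightMeasureSet_iff_exists_isCompact_measure_compl_le.2 fun ε hε => ?_
  obtain ⟨T, hT, hST⟩ := hS ε hε
  obtain ⟨K, hK, hTK⟩ := isTightMeasureSet_iff_exists_isCompact_measure_compl_le.1 hT ε hε
  exact ⟨K, hK, fun μ hμ => (hST μ hμ).elim (hTK μ) (measure_mono (subset_univ _)).trans⟩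

lemma isTightMeasureSet_of_map {f : X → Y} (hf : Measurable f)
    (hf_cocompact : Tendsto f (cocompact X) (cocompact Y))
    (hS : IsTightMeasureSet (Measure.map f '' S)) : IsTightMeasureSet S := by
  rw [isTightMeasureSet_iff_exists_isCompact_measure_compl_le] at hS ⊢
  intro ε hε
  obtain ⟨K, hK, hSK⟩ := hS ε hε
  obtain ⟨L, hL, hLK⟩ := mem_cocompact.1 (hf_cocompact hK.compl_mem_cocompact)
  exact ⟨L, hL, fun μ hμ => (measure_mono hLK).trans <|
    (Measure.le_map_apply hf.aemeasurable _).trans (hSK _ (mem_image_of_mem _ hμ))⟩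

lemma isTightMeasureSet_countable_mixtures [Countable ι] (hS : IsTightMeasureSet S) :
    IsTightMeasureSet {ν : Measure X | ∃ (w : ι → ℝ≥0∞) (μ : ι → Measure X),
      ∑' i, w i ≤ 1 ∧ (∀ i, μ i ∈ S) ∧ ν = Measure.sum fun i => w i • μ i} := by
  rw [isTightMeasureSet_iff_exists_isCompact_measure_compl_le] at hS ⊢
  intro ε hε
  obtain ⟨K, hK, hSK⟩ := hS ε hε
  refine ⟨K, hK, ?_⟩
  rintro _ ⟨w, μ, hw, hμ, rfl⟩
  calc Measure.sum (fun i => w i • μ i) Kᶜ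
      = ∑' i, w i * μ i Kᶜ := by simp [Measure.sum_apply_of_countable]
    _ ≤ ∑' i, w i * ε := by gcongr with i; exact hSK _ (hμ i)
    _ = (∑' i, w i) * ε := ENNReal.tsum_mul_right
    _ ≤ ε := mul_le_of_le_one_left zero_le hw

end Tightness

section HolderCompactness

open scoped NNReal

variable {X E : Type*} {C γ : ℝ≥0}

lemma equicontinuous_of_forall_holderWith [PseudoMetricSpace X] [PseudoMetricSpace E]
    {ι : Type*} {F : ι → X → E} (hγ : 0 < γ) (hF : ∀ i, HolderWith C γ (F i)) :
    Equicontinuous F := by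
  refine Metric.equicontinuous_of_continuity_modulus (fun r => C * r ^ (γ : ℝ)) ?_ F
    fun s t i => (hF i).dist_le s t
  have hcont : Continuous fun r : ℝ => (C : ℝ) * r ^ (γ : ℝ) := by fun_prop (disch := positivity)
  simpa [hγ.ne'] using hcont.tendsto 0

lemma isClosed_setOf_holderWith [PseudoEMetricSpace X] [PseudoEMetricSpace E] :
    IsClosed {f : X → E | HolderWith C γ f} := by
  simp only [HolderWith, ofPred_forall]
  exact isClosed_iInter fun s => isClosed_iInter fun t => isClosed_le (by fun_prop) (by fun_prop)

lemma isCompact_setOf_holderWith [PseudoMetricSpace X] [MetricSpace E] [ProperSpace E]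
    (hγ : 0 < γ) {K : Set E} (hK : IsCompact K) (s₀ : X) :
    IsCompact {ω : C(X, E) | ω s₀ ∈ K ∧ HolderWith C γ ω} := by
  refine ArzelaAscoli.isCompact_of_equicontinuous _ ?_
    (equicontinuous_of_forall_holderWith hγ fun ω => ω.2.2)
  have himage : ContinuousMap.toFun '' {ω : C(X, E) | ω s₀ ∈ K ∧ HolderWith C γ ω} =
      {f | f s₀ ∈ K} ∩ {f | HolderWith C γ f} := by
    ext f
    exact ⟨by rintro ⟨ω, hω, rfl⟩; exact hω, fun hf => ⟨⟨f, hf.2.continuous hγ⟩, hf, rfl⟩⟩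
  rw [himage]
  have hprod := isCompact_univ_pi fun s => hK.cthickening (r := C * dist s s₀ ^ (γ : ℝ))
  refine hprod.of_isClosed_subset
    ((hK.isClosed.preimage (continuous_apply s₀)).inter isClosed_setOf_holderWith) ?_
  rintro f ⟨hf₀, hf⟩ s -
  exact Metric.mem_cthickening_of_dist_le _ _ _ _ hf₀ (hf.dist_le s s₀)

end HolderCompactness

section DyadicChaining

open scoped NNReal

/-- The dyadic point `k / 2ⁿ` of the unit interval, truncated to `1` for `2ⁿ ≤ k`. -/
def dyadicPt (n k : ℕ) : I := projIcc 0 1 zero_le_one ((k : ℝ) / 2 ^ n)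

lemma dyadicPt_two_mul (n k : ℕ) : dyadicPt (n + 1) (2 * k) = dyadicPt n k := by
  unfold dyadicPt
  congr 1
  push_cast
  field_simp
  ring

lemma dyadicPt_of_le {n k : ℕ} (h : 2 ^ n ≤ k) : dyadicPt n k = 1 :=
  projIcc_of_right_le _ <| (one_le_div (by positivity)).2 <| by exact_mod_cast h

lemma edist_dyadicPt_succ_le (n k : ℕ) :
    edist (dyadicPt n k) (dyadicPt n (k + 1)) ≤ 2⁻¹ ^ n := by
  refine (LipschitzWith.projIcc zero_le_one _ _).trans_eq ?_
  have hsub : ((k + 1 : ℕ) : ℝ) / 2 ^ n - (k : ℝ) / 2 ^ n = ((2⁻¹ ^ n : ℝ≥0) : ℝ) := by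
    push_cast [inv_pow]
    ring
  rw [edist_comm, edist_dist, Real.dist_eq, hsub, NNReal.abs_eq, ENNReal.ofReal_coe_nnreal]
  simp [ENNReal.inv_pow]

lemma tendsto_dyadicPt_floor (u : I) :
    Tendsto (fun n : ℕ => dyadicPt n ⌊(2 : ℝ) ^ n * u⌋₊) atTop (𝓝 u) := by
  have hfloor : Tendsto (fun n : ℕ => (⌊(2 : ℝ) ^ n * u⌋₊ : ℝ) / 2 ^ n) atTop (𝓝 u) := by
    simpa [Function.comp_def, mul_comm] using (tendsto_nat_floor_mul_div_atTop u.2.1).comp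
      (tendsto_pow_atTop_atTop_of_one_lt (one_lt_two (α := ℝ)))
  have hproj := (continuous_projIcc (h := zero_le_one (α := ℝ))).tendsto (u : ℝ)
  rw [projIcc_val] at hproj
  exact hproj.comp hfloor

lemma dist_le_of_le_succ {E : Type*} [PseudoMetricSpace E] {g : ℕ → E} {C : ℝ} (hC : 0 ≤ C)
    (hg : ∀ k, dist (g k) (g (k + 1)) ≤ C) {j k : ℕ} (hjk : j ≤ k) (hkj : k ≤ j + 1) :
    dist (g j) (g k) ≤ C := by
  obtain rfl | rfl : k = j ∨ k = j + 1 := by lia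
  · simpa
  · exact hg j

variable {E : Type*} [PseudoMetricSpace E] {f : I → E} {C θ : ℝ}

lemma dist_dyadicPt_floor_le (hC : 0 ≤ C) (hθ₀ : 0 ≤ θ) (hθ₁ : θ < 1) (hf : Continuous f)
    (hdyadic : ∀ n k, dist (f (dyadicPt n k)) (f (dyadicPt n (k + 1))) ≤ C * θ ^ n)
    (n : ℕ) (u : I) :
    dist (f (dyadicPt n ⌊(2 : ℝ) ^ n * u⌋₊)) (f u) ≤ C * θ * θ ^ n / (1 - θ) := by
  refine dist_le_of_le_geometric_of_tendsto θ (C * θ) hθ₁ (fun j => ?_)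
    ((hf.tendsto u).comp (tendsto_dyadicPt_floor u)) n
  have hfloor : ⌊(2 : ℝ) ^ j * u⌋₊ = ⌊(2 : ℝ) ^ (j + 1) * u⌋₊ / 2 := by
    rw [← Nat.floor_div_ofNat]
    congr 1
    ring
  rw [Function.comp_apply, Function.comp_apply, ← dyadicPt_two_mul, mul_assoc, ← pow_succ', hfloor]
  exact dist_le_of_le_succ (g := fun k => f (dyadicPt (j + 1) k)) (by positivity)
    (hdyadic (j + 1)) (by lia) (by lia)

lemma dist_le_of_dist_dyadicPt_le (hC : 0 ≤ C) (hθ₀ : 0 ≤ θ) (hθ₁ : θ < 1) (hf : Continuous f)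
    (hdyadic : ∀ n k, dist (f (dyadicPt n k)) (f (dyadicPt n (k + 1))) ≤ C * θ ^ n)
    {n : ℕ} {s t : I} (hst : s ≤ t) (hts : (t : ℝ) - s ≤ 2⁻¹ ^ n) :
    dist (f s) (f t) ≤ (1 + θ) / (1 - θ) * C * θ ^ n := by
  have hle : (2 : ℝ) ^ n * s ≤ 2 ^ n * t := by
    gcongr
  have hle_add : (2 : ℝ) ^ n * t ≤ 2 ^ n * s + 1 := by
    have hone : (2 : ℝ) ^ n * 2⁻¹ ^ n = 1 := by simp
    linear_combination 2 ^ n * hts + hone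
  have hfloor : ⌊(2 : ℝ) ^ n * t⌋₊ ≤ ⌊(2 : ℝ) ^ n * s⌋₊ + 1 :=
    (Nat.floor_mono hle_add).trans_eq (Nat.floor_add_one (by have := s.2.1; positivity))
  have hmid := dist_le_of_le_succ (g := fun k => f (dyadicPt n k)) (by positivity)
    (hdyadic n) (Nat.floor_mono hle) hfloor
  have hs := dist_dyadicPt_floor_le hC hθ₀ hθ₁ hf hdyadic n s
  have ht := dist_dyadicPt_floor_le hC hθ₀ hθ₁ hf hdyadic n t
  calc dist (f s) (f t)
      ≤ _ := dist_triangle4 _ (f (dyadicPt n ⌊(2 : ℝ) ^ n * s⌋₊))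
        (f (dyadicPt n ⌊(2 : ℝ) ^ n * t⌋₊)) _
    _ ≤ C * θ * θ ^ n / (1 - θ) + C * θ ^ n + C * θ * θ ^ n / (1 - θ) :=
        add_le_add_three (dist_comm (f s) _ ▸ hs) hmid ht
    _ = (1 + θ) / (1 - θ) * C * θ ^ n := by
        have hne : 1 - θ ≠ 0 := by linarith
        field_simp
        ring

lemma holderWith_of_nndist_le_pow {γ B : ℝ≥0} {f : I → E}
    (hf : ∀ (n : ℕ) (s t : I), s ≤ t → (t : ℝ) - s ≤ 2⁻¹ ^ n →
      nndist (f s) (f t) ≤ B * ((2⁻¹ : ℝ≥0) ^ (γ : ℝ)) ^ n) :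
    HolderWith (B / (2⁻¹ : ℝ≥0) ^ (γ : ℝ)) γ f := by
  intro s t
  wlog hst : s ≤ t generalizing s t
  · rw [edist_comm (f s), edist_comm s]
    exact this t s (le_of_not_ge hst)
  obtain rfl | hlt := hst.eq_or_lt
  · simp
  have hsub : 0 < (t : ℝ) - s := sub_pos.2 hlt
  obtain ⟨n, hn, hn'⟩ := exists_nat_pow_near_of_lt_one hsub
    (by linarith [t.2.2, s.2.1] : (t : ℝ) - s ≤ 1) (by norm_num) (by norm_num : (2⁻¹ : ℝ) < 1)
  have hpow : ((2⁻¹ : ℝ≥0) ^ (γ : ℝ)) ^ (n + 1) ≤ nndist s t ^ (γ : ℝ) := by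
    rw [← NNReal.rpow_mul_natCast, mul_comm, NNReal.rpow_natCast_mul]
    gcongr
    rw [← NNReal.coe_le_coe, nndist_comm]
    push_cast [Subtype.dist_eq, Real.dist_eq, abs_of_pos hsub]
    exact hn.le
  rw [edist_nndist, edist_nndist, ← ENNReal.coe_rpow_of_nonneg _ γ.coe_nonneg]
  norm_cast
  calc nndist (f s) (f t) ≤ B * ((2⁻¹ : ℝ≥0) ^ (γ : ℝ)) ^ n := hf n s t hst hn'
    _ = B / (2⁻¹ : ℝ≥0) ^ (γ : ℝ) * ((2⁻¹ : ℝ≥0) ^ (γ : ℝ)) ^ (n + 1) := by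
        field_simp
        ring
    _ ≤ B / (2⁻¹ : ℝ≥0) ^ (γ : ℝ) * nndist s t ^ (γ : ℝ) := by gcongr

lemma exists_forall_holderWith_of_dyadicPt {γ : ℝ≥0} (hγ : 0 < γ) :
    ∃ K : ℝ≥0, ∀ (f : I → E) (C : ℝ≥0), Continuous f →
      (∀ n, ∀ k < 2 ^ n,
        nndist (f (dyadicPt n k)) (f (dyadicPt n (k + 1))) ≤ C * ((2⁻¹ : ℝ≥0) ^ (γ : ℝ)) ^ n) →
      HolderWith (K * C) γ f := by
  set θ : ℝ≥0 := (2⁻¹ : ℝ≥0) ^ (γ : ℝ)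
  have hθ₁ : θ < 1 := NNReal.rpow_lt_one (by norm_num) hγ
  refine ⟨(1 + θ) / (1 - θ) / θ, fun f C hf hdyadic => ?_⟩
  have hdyadic' : ∀ n k, dist (f (dyadicPt n k)) (f (dyadicPt n (k + 1))) ≤ C * (θ : ℝ) ^ n := by
    intro n k
    rcases lt_or_ge k (2 ^ n) with hk | hk
    · exact_mod_cast hdyadic n k hk
    · rw [dyadicPt_of_le hk, dyadicPt_of_le (hk.trans k.le_succ), dist_self]
      positivity
  have hscale : HolderWith ((1 + θ) / (1 - θ) * C / θ) γ f := by
    refine holderWith_of_nndist_le_pow fun n s t hst hts => ?_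
    rw [← NNReal.coe_le_coe]
    push_cast [NNReal.coe_sub hθ₁.le]
    exact dist_le_of_dist_dyadicPt_le C.2 θ.2 (by exact_mod_cast hθ₁) hf hdyadic' hst hts
  rwa [mul_div_right_comm] at hscale

end DyadicChaining

section KolmogorovCriterion

open ProbabilityTheory
open scoped NNReal

variable {Ω E : Type*} [MeasurableSpace Ω] [PseudoMetricSpace E] {μ : Measure Ω}
  {X : I → Ω → E} {p q : ℝ} {M C γ : ℝ≥0}

lemma measure_lt_nndist_dyadicPt_le (hX : IsKolmogorovProcess X μ p q M) (hC : 0 < C)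
    (n k : ℕ) :
    μ {ω | C * ((2⁻¹ : ℝ≥0) ^ (γ : ℝ)) ^ n <
        nndist (X (dyadicPt n k) ω) (X (dyadicPt n (k + 1)) ω)} ≤
      M / C ^ p * ((2⁻¹ : ℝ≥0∞) ^ (q - γ * p)) ^ n := by
  have hp := hX.p_pos
  have hq := hX.q_pos
  set ε : ℝ≥0 := C * ((2⁻¹ : ℝ≥0) ^ (γ : ℝ)) ^ n
  have hε₀ : ε ≠ 0 := by positivity
  have hε : (ε : ℝ≥0∞) ^ p = C ^ p * (2⁻¹ : ℝ≥0∞) ^ (γ * p * n) := by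
    push_cast [ε, ENNReal.mul_rpow_of_nonneg _ _ hp.le, ENNReal.coe_rpow_of_nonneg _ γ.coe_nonneg]
    rw [← ENNReal.rpow_natCast, ← ENNReal.rpow_mul, ← ENNReal.rpow_mul]
    ring_nf
  calc μ {ω | ε < nndist (X (dyadicPt n k) ω) (X (dyadicPt n (k + 1)) ω)}
      ≤ μ {ω | (ε : ℝ≥0∞) ^ p ≤ edist (X (dyadicPt n k) ω) (X (dyadicPt n (k + 1)) ω) ^ p} := by
        refine measure_mono fun ω hω => ENNReal.rpow_le_rpow ?_ hp.le
        rw [edist_nndist]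
        exact_mod_cast hω.le
    _ ≤ M * edist (dyadicPt n k) (dyadicPt n (k + 1)) ^ q / (ε : ℝ≥0∞) ^ p := by
        refine (meas_ge_le_lintegral_div (hX.measurable_edist.pow_const p).aemeasurable ?_ ?_).trans
          (ENNReal.div_le_div_right (hX.kolmogorovCondition _ _) _)
        · simp [hε₀]
        · exact ENNReal.rpow_ne_top_of_nonneg hp.le ENNReal.coe_ne_top
    _ ≤ M * (2⁻¹ ^ n) ^ q / (ε : ℝ≥0∞) ^ p := by
        gcongr
        exact edist_dyadicPt_succ_le n k
    _ = M / C ^ p * ((2⁻¹ : ℝ≥0∞) ^ (q - γ * p)) ^ n := by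
        rw [hε, ENNReal.mul_div_mul_comm (.inr (by simp)) (.inr (by simp)),
          ← ENNReal.rpow_natCast_mul, ← ENNReal.rpow_sub _ _ (by simp) (by simp),
          ← ENNReal.rpow_mul_natCast]
        ring_nf

lemma measure_exists_lt_nndist_dyadicPt_le (hX : IsKolmogorovProcess X μ p q M) (hC : 0 < C) :
    μ {ω | ∃ n, ∃ k < 2 ^ n, C * ((2⁻¹ : ℝ≥0) ^ (γ : ℝ)) ^ n <
        nndist (X (dyadicPt n k) ω) (X (dyadicPt n (k + 1)) ω)} ≤
      M / C ^ p * (1 - (2⁻¹ : ℝ≥0∞) ^ (q - γ * p - 1))⁻¹ := by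
  have hscale (n : ℕ) : μ (⋃ k ∈ Finset.range (2 ^ n), {ω | C * ((2⁻¹ : ℝ≥0) ^ (γ : ℝ)) ^ n <
      nndist (X (dyadicPt n k) ω) (X (dyadicPt n (k + 1)) ω)}) ≤
        M / C ^ p * ((2⁻¹ : ℝ≥0∞) ^ (q - γ * p - 1)) ^ n := by
    calc _ ≤ ∑ _k ∈ Finset.range (2 ^ n), M / C ^ p * ((2⁻¹ : ℝ≥0∞) ^ (q - γ * p)) ^ n :=
          (measure_biUnion_finset_le _ _).trans <| Finset.sum_le_sum fun k _ =>
            measure_lt_nndist_dyadicPt_le hX hC n k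
      _ = M / C ^ p * (2 * (2⁻¹ : ℝ≥0∞) ^ (q - γ * p)) ^ n := by
          simp [mul_pow, mul_left_comm]
      _ = M / C ^ p * ((2⁻¹ : ℝ≥0∞) ^ (q - γ * p - 1)) ^ n := by
          rw [ENNReal.rpow_sub (q - γ * p) 1 (by simp) (by simp), ENNReal.rpow_one,
            div_eq_mul_inv (_ ^ (q - γ * p)), inv_inv, mul_comm 2]
  calc _ ≤ μ (⋃ n, ⋃ k ∈ Finset.range (2 ^ n), {ω | C * ((2⁻¹ : ℝ≥0) ^ (γ : ℝ)) ^ n <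
        nndist (X (dyadicPt n k) ω) (X (dyadicPt n (k + 1)) ω)}) :=
        measure_mono fun ω => by simp
    _ ≤ ∑' n, M / C ^ p * ((2⁻¹ : ℝ≥0∞) ^ (q - γ * p - 1)) ^ n :=
        (measure_iUnion_le _).trans (ENNReal.tsum_le_tsum hscale)
    _ = M / C ^ p * (1 - (2⁻¹ : ℝ≥0∞) ^ (q - γ * p - 1))⁻¹ := by
        rw [ENNReal.tsum_mul_left, ENNReal.tsum_geometric]

lemma exists_pos_div_rpow_le {A ε : ℝ≥0∞} (hA : A ≠ ∞) (hε : ε ≠ 0) (hp : 0 < p) :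
    ∃ C : ℝ≥0, 0 < C ∧ A / C ^ p ≤ ε := by
  obtain ⟨n, hn⟩ := ENNReal.exists_nat_mul_gt hε hA
  have hn₀ : n ≠ 0 := by
    rintro rfl
    simp at hn
  refine ⟨(n : ℝ≥0) ^ p⁻¹, by positivity, ENNReal.div_le_of_le_mul ?_⟩
  rw [← ENNReal.coe_rpow_of_nonneg _ hp.le, NNReal.rpow_inv_rpow hp.ne', mul_comm]
  exact_mod_cast hn.le

lemma exists_forall_measure_not_holderWith_le (M : ℝ≥0) (hp : 0 < p) (hq : 1 < q)
    {ε : ℝ≥0∞} (hε : ε ≠ 0) :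
    ∃ C γ : ℝ≥0, 0 < γ ∧ ∀ (μ : Measure Ω) (X : I → Ω → E), IsKolmogorovProcess X μ p q M →
      (∀ ω, Continuous (X · ω)) → μ {ω | ¬ HolderWith C γ (X · ω)} ≤ ε := by
  obtain ⟨γ, hγ, hγq⟩ : ∃ γ : ℝ≥0, 0 < γ ∧ 0 < q - γ * p - 1 := by
    have hexp : 0 < (q - 1) / (2 * p) := div_pos (sub_pos.2 hq) (by positivity)
    refine ⟨.mk ((q - 1) / (2 * p)) hexp.le, hexp, ?_⟩
    rw [NNReal.coe_mk]
    field_simp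
    linarith
  obtain ⟨K, hK⟩ := exists_forall_holderWith_of_dyadicPt (E := E) hγ
  have hfin : (1 - (2⁻¹ : ℝ≥0∞) ^ (q - γ * p - 1))⁻¹ ≠ ∞ :=
    ENNReal.inv_ne_top.2 (tsub_pos_of_lt (ENNReal.rpow_lt_one (by simp) hγq)).ne'
  obtain ⟨C, hC, hCε⟩ := exists_pos_div_rpow_le (p := p)
    (ENNReal.mul_ne_top (ENNReal.coe_ne_top (r := M)) hfin) hε hp
  refine ⟨K * C, γ, hγ, fun μ X hX hcont => ?_⟩
  calc μ {ω | ¬ HolderWith (K * C) γ (X · ω)}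
      ≤ _ := measure_mono fun ω hω => by
        by_contra hdyadic
        exact hω (hK _ C (hcont ω) (by simpa using hdyadic))
    _ ≤ M / C ^ p * (1 - (2⁻¹ : ℝ≥0∞) ^ (q - γ * p - 1))⁻¹ :=
        measure_exists_lt_nndist_dyadicPt_le hX hC
    _ ≤ ε := by rwa [← ENNReal.mul_div_right_comm]

theorem isTightMeasureSet_of_isKolmogorovProcess {E : Type*} [MetricSpace E] [ProperSpace E]
    [MeasurableSpace E] [BorelSpace E] [MeasurableSpace C(I, E)] {S : Set (Measure C(I, E))}
    (hp : 0 < p) (hq : 1 < q)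
    (h_init : IsTightMeasureSet (Measure.map (fun ω => ω 0) '' S))
    (hS : ∀ μ ∈ S, IsKolmogorovProcess (fun t ω => ω t) μ p q M) : IsTightMeasureSet S := by
  rw [isTightMeasureSet_iff_exists_isCompact_measure_compl_le] at h_init ⊢
  intro ε hε
  obtain ⟨L, hL, hSL⟩ := h_init (ε / 2) (ENNReal.half_pos hε.ne')
  obtain ⟨C, γ, hγ, hC⟩ := exists_forall_measure_not_holderWith_le (Ω := C(I, E)) (E := E) M
    hp hq (ENNReal.half_pos hε.ne').ne'
  refine ⟨_, isCompact_setOf_holderWith (C := C) hγ hL 0, fun μ hμ => ?_⟩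
  calc μ {ω | ω 0 ∈ L ∧ HolderWith C γ ω}ᶜ
      ≤ μ ((fun ω => ω 0) ⁻¹' Lᶜ ∪ {ω | ¬ HolderWith C γ ω}) :=
        measure_mono fun ω => by simpa using Classical.not_and_iff_not_or_not.1
    _ ≤ Measure.map (fun ω => ω 0) μ Lᶜ + μ {ω | ¬ HolderWith C γ ω} :=
        (measure_union_le _ _).trans <| add_le_add_left
          (Measure.le_map_apply ((hS μ hμ).measurable 0).aemeasurable _) _
    _ ≤ ε / 2 + ε / 2 :=
        add_le_add (hSL _ (mem_image_of_mem _ hμ)) (hC μ _ (hS μ hμ) fun ω => ω.continuous)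
    _ = ε := ENNReal.add_halves ε

end KolmogorovCriterion

section FourthMoment

variable {Ω E : Type*} [MeasurableSpace Ω] [NormedAddCommGroup E] [InnerProductSpace ℝ E]
  [MeasurableSpace E] [BorelSpace E] [FiniteDimensional ℝ E] {μ : Measure Ω} {Z : Ω → E}
  {M : ℝ≥0∞} {v : ℝ}

lemma pow_four_le_exp_add_exp_neg (u : ℝ) : u ^ 4 ≤ 24 * (exp u + exp (-u)) := by
  have hfact : |u| ^ 4 / 24 ≤ exp |u| := by
    simpa [Nat.factorial] using Real.pow_div_factorial_le_exp |u| (abs_nonneg u) 4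
  have habs : exp |u| ≤ exp u + exp (-u) := by
    rcases abs_choice u with h | h <;> rw [h] <;> linarith [exp_pos u, exp_pos (-u)]
  rw [pow_abs, abs_of_nonneg (by positivity)] at hfact
  linarith

lemma norm_pow_four_le_sum_inner_pow_four {ι E : Type*} [Fintype ι] [NormedAddCommGroup E]
    [InnerProductSpace ℝ E] (b : OrthonormalBasis ι ℝ E) (z : E) :
    ‖z‖ ^ 4 ≤ Fintype.card ι * ∑ i, ⟪b i, z⟫ ^ 4 := by
  calc ‖z‖ ^ 4 = (∑ i, ⟪b i, z⟫ ^ 2) ^ 2 := by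
        rw [b.sum_sq_inner_right]
        ring
    _ ≤ Fintype.card ι * ∑ i, (⟪b i, z⟫ ^ 2) ^ 2 := sq_sum_le_card_mul_sum_sq
    _ = Fintype.card ι * ∑ i, ⟪b i, z⟫ ^ 4 := by simp_rw [← pow_mul]

lemma lintegral_inner_pow_four_le (hZ : AEMeasurable Z μ) (hv : 0 < v)
    (hexp : ∀ ξ, ∫⁻ ω, .ofReal (exp ⟪ξ, Z ω⟫) ∂μ ≤ M * .ofReal (exp (v * ‖ξ‖ ^ 2 / 2)))
    {e : E} (he : ‖e‖ = 1) :
    ∫⁻ ω, .ofReal (⟪e, Z ω⟫ ^ 4) ∂μ ≤ .ofReal (48 * exp (1 / 2) * v ^ 2) * M := by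
  set ξ : E := (√v)⁻¹ • e
  have hnorm : v * ‖ξ‖ ^ 2 / 2 = 1 / 2 := by
    rw [norm_smul, he, mul_one, norm_inv, inv_pow, norm_of_nonneg (by positivity),
      Real.sq_sqrt hv.le]
    field_simp
  have hpoint (ω : Ω) : ENNReal.ofReal (⟪e, Z ω⟫ ^ 4) ≤
      .ofReal (24 * v ^ 2) * (.ofReal (exp ⟪ξ, Z ω⟫) + .ofReal (exp ⟪-ξ, Z ω⟫)) := by
    rw [← ENNReal.ofReal_add (by positivity) (by positivity), ← ENNReal.ofReal_mul (by positivity)]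
    refine ENNReal.ofReal_le_ofReal ?_
    have hscale : ⟪e, Z ω⟫ = √v * ⟪ξ, Z ω⟫ := by
      rw [real_inner_smul_left]
      field_simp
    have hsqrt : √v ^ 4 = v ^ 2 := by rw [show 4 = 2 * 2 from rfl, pow_mul, Real.sq_sqrt hv.le]
    rw [hscale, mul_pow, hsqrt, inner_neg_left, mul_comm 24, mul_assoc]
    gcongr
    exact pow_four_le_exp_add_exp_neg _
  calc ∫⁻ ω, ENNReal.ofReal (⟪e, Z ω⟫ ^ 4) ∂μ
      ≤ .ofReal (24 * v ^ 2) * (∫⁻ ω, .ofReal (exp ⟪ξ, Z ω⟫) ∂μ +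
          ∫⁻ ω, .ofReal (exp ⟪-ξ, Z ω⟫) ∂μ) := by
        rw [← lintegral_add_left' (by fun_prop), ← lintegral_const_mul' _ _ ENNReal.ofReal_ne_top]
        exact lintegral_mono hpoint
    _ ≤ .ofReal (24 * v ^ 2) * (M * .ofReal (exp (1 / 2)) + M * .ofReal (exp (1 / 2))) := by
        gcongr
        · exact (hexp ξ).trans_eq (by rw [hnorm])
        · exact (hexp (-ξ)).trans_eq (by rw [norm_neg, hnorm])
    _ = .ofReal (48 * exp (1 / 2) * v ^ 2) * M := by
        rw [show 48 * exp (1 / 2) * v ^ 2 = 24 * v ^ 2 * (exp (1 / 2) + exp (1 / 2)) by ring,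
          ENNReal.ofReal_mul (p := 24 * v ^ 2) (by positivity),
          ENNReal.ofReal_add (by positivity) (by positivity)]
        ring

lemma lintegral_enorm_pow_four_le (hZ : AEMeasurable Z μ) (hv : 0 < v)
    (hexp : ∀ ξ, ∫⁻ ω, .ofReal (exp ⟪ξ, Z ω⟫) ∂μ ≤ M * .ofReal (exp (v * ‖ξ‖ ^ 2 / 2))) :
    ∫⁻ ω, ‖Z ω‖ₑ ^ 4 ∂μ ≤
      (Module.finrank ℝ E) ^ 2 * (.ofReal (48 * exp (1 / 2) * v ^ 2) * M) := by
  have b := stdOrthonormalBasis ℝ E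
  have hpoint (ω : Ω) :
      ‖Z ω‖ₑ ^ 4 ≤ Module.finrank ℝ E * ∑ i, ENNReal.ofReal (⟪b i, Z ω⟫ ^ 4) := by
    rw [← ofReal_norm, ← ENNReal.ofReal_pow (norm_nonneg _),
      ← ENNReal.ofReal_sum_of_nonneg fun i _ => by positivity, ← ENNReal.ofReal_natCast,
      ← ENNReal.ofReal_mul (by positivity)]
    exact ENNReal.ofReal_le_ofReal (by simpa using norm_pow_four_le_sum_inner_pow_four b (Z ω))
  calc ∫⁻ ω, ‖Z ω‖ₑ ^ 4 ∂μ
      ≤ Module.finrank ℝ E * ∑ i, ∫⁻ ω, .ofReal (⟪b i, Z ω⟫ ^ 4) ∂μ := by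
        rw [← lintegral_finsetSum' _ fun i _ => by fun_prop,
          ← lintegral_const_mul' _ _ (ENNReal.natCast_ne_top _)]
        exact lintegral_mono hpoint
    _ ≤ Module.finrank ℝ E * ∑ _i : Fin (Module.finrank ℝ E),
          .ofReal (48 * exp (1 / 2) * v ^ 2) * M := by
        gcongr with i
        exact lintegral_inner_pow_four_le hZ hv hexp (b.norm_eq_one i)
    _ = (Module.finrank ℝ E) ^ 2 * (.ofReal (48 * exp (1 / 2) * v ^ 2) * M) := by
        simp [sq, mul_assoc]

end FourthMoment

section HeatKernel

variable {E : Type*} [NormedAddCommGroup E] [InnerProductSpace ℝ E] {s t : ℝ}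

/-- The heat kernel of a finite-dimensional Euclidean space, as a function of the time `t` and the
displacement `v`; junk for `t ≤ 0`. -/
def heatKernel (t : ℝ) (v : E) : ℝ :=
  (2 * π * t) ^ (-(Module.finrank ℝ E : ℝ) / 2) * exp (-‖v‖ ^ 2 / (2 * t))

lemma heatKernel_nonneg (ht : 0 ≤ t) (v : E) : 0 ≤ heatKernel t v := by
  unfold heatKernel
  positivity

lemma heatKernel_le (ht : 0 ≤ t) (v : E) :
    heatKernel t v ≤ (2 * π * t) ^ (-(Module.finrank ℝ E : ℝ) / 2) := by
  refine mul_le_of_le_one_right (by positivity) (exp_le_one_iff.2 ?_)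
  rw [neg_div]
  exact neg_nonpos.2 (by positivity)

lemma continuous_heatKernel (t : ℝ) : Continuous (heatKernel t : E → ℝ) := by
  unfold heatKernel
  fun_prop

lemma heatKernel_mul_exp_inner (hs : 0 < s) (ξ v : E) :
    heatKernel s v * exp ⟪ξ, v⟫ = exp (s * ‖ξ‖ ^ 2 / 2) * heatKernel s (v - s • ξ) := by
  have hexp : exp (-‖v‖ ^ 2 / (2 * s)) * exp ⟪ξ, v⟫ =
      exp (s * ‖ξ‖ ^ 2 / 2) * exp (-‖v - s • ξ‖ ^ 2 / (2 * s)) := by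
    rw [← exp_add, ← exp_add, norm_sub_sq_real, norm_smul, real_inner_smul_right,
      real_inner_comm v ξ, mul_pow, Real.norm_eq_abs, sq_abs]
    congr 1
    field_simp
    ring
  rw [heatKernel, mul_assoc, hexp, mul_left_comm, ← heatKernel]

lemma sq_norm_div_add_sq_norm_sub_div (hs : 0 < s) (ht : 0 < t) (u w : E) :
    ‖u‖ ^ 2 / (2 * s) + ‖w - u‖ ^ 2 / (2 * t) =
      (s + t) / (2 * s * t) * ‖u - (s / (s + t)) • w‖ ^ 2 + ‖w‖ ^ 2 / (2 * (s + t)) := by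
  rw [norm_sub_sq_real, norm_sub_sq_real, norm_smul, real_inner_smul_right, real_inner_comm w u,
    mul_pow, Real.norm_eq_abs, sq_abs]
  field_simp
  ring

lemma heatKernel_mul_heatKernel_sub (hs : 0 < s) (ht : 0 < t) (u w : E) :
    heatKernel s u * heatKernel t (w - u) =
      (2 * π * s) ^ (-(Module.finrank ℝ E : ℝ) / 2) *
        (2 * π * t) ^ (-(Module.finrank ℝ E : ℝ) / 2) * exp (-‖w‖ ^ 2 / (2 * (s + t))) *
        exp (-((s + t) / (2 * s * t)) * ‖u - (s / (s + t)) • w‖ ^ 2) := by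
  have hexp : exp (-‖u‖ ^ 2 / (2 * s)) * exp (-‖w - u‖ ^ 2 / (2 * t)) =
      exp (-‖w‖ ^ 2 / (2 * (s + t))) *
        exp (-((s + t) / (2 * s * t)) * ‖u - (s / (s + t)) • w‖ ^ 2) := by
    rw [← exp_add, ← exp_add]
    congr 1
    linear_combination -sq_norm_div_add_sq_norm_sub_div hs ht u w
  rw [mul_assoc, ← hexp, heatKernel, heatKernel, mul_mul_mul_comm]

lemma tendsto_heatKernel_nhdsGT_zero {v : E} (hv : v ≠ 0) :
    Tendsto (fun t => heatKernel t v) (𝓝[>] 0) (𝓝 0) := by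
  have hv_pos : 0 < ‖v‖ ^ 2 / 2 := by positivity
  have hlim := ((tendsto_rpow_mul_exp_neg_mul_atTop_nhds_zero ((Module.finrank ℝ E : ℝ) / 2) _
    hv_pos).comp tendsto_inv_nhdsGT_zero).const_mul
      ((2 * π) ^ (-(Module.finrank ℝ E : ℝ) / 2))
  rw [mul_zero] at hlim
  refine hlim.congr' ?_
  filter_upwards [self_mem_nhdsWithin] with t (ht : 0 < t)
  rw [Function.comp_apply, heatKernel, mul_rpow (by positivity) ht.le, neg_div (2 : ℝ) _,
    inv_rpow ht.le, rpow_neg ht.le, mul_assoc]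
  congr 3
  field_simp

variable [FiniteDimensional ℝ E]

lemma tendsto_heatKernel_atTop [Nontrivial E] (v : E) :
    Tendsto (fun t => heatKernel t v) atTop (𝓝 0) := by
  have hfinrank : 0 < (Module.finrank ℝ E : ℝ) := Nat.cast_pos.2 Module.finrank_pos
  have hlim : Tendsto (fun t : ℝ => (2 * π * t) ^ (-(Module.finrank ℝ E : ℝ) / 2)) atTop (𝓝 0) := by
    rw [neg_div]
    exact (tendsto_rpow_neg_atTop (by positivity)).comp
      (tendsto_id.const_mul_atTop (by positivity))
  refine squeeze_zero' ?_ ?_ hlim <;> filter_upwards [eventually_ge_atTop 0] with t ht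
  exacts [heatKernel_nonneg ht v, heatKernel_le ht v]

variable [MeasurableSpace E] [BorelSpace E]

lemma lintegral_exp_neg_mul_sq_norm {b : ℝ} (hb : 0 < b) :
    ∫⁻ v : E, .ofReal (exp (-b * ‖v‖ ^ 2)) =
      .ofReal ((π / b) ^ (Module.finrank ℝ E / 2 : ℝ)) := by
  have hint := GaussianFourier.integral_rexp_neg_mul_sq_norm (V := E) hb
  rw [← hint, ofReal_integral_eq_lintegral_ofReal _ (ae_of_all _ fun v => (exp_pos _).le)]
  exact Integrable.of_integral_ne_zero (hint.trans_ne (by positivity))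

lemma lintegral_heatKernel_mul_heatKernel_sub (hs : 0 < s) (ht : 0 < t) (w : E) :
    ∫⁻ u, .ofReal (heatKernel s u) * .ofReal (heatKernel t (w - u)) =
      .ofReal (heatKernel (s + t) w) := by
  have hconst : (2 * π * s) ^ (-(Module.finrank ℝ E : ℝ) / 2) *
      (2 * π * t) ^ (-(Module.finrank ℝ E : ℝ) / 2) *
      (π / ((s + t) / (2 * s * t))) ^ (Module.finrank ℝ E / 2 : ℝ) =
        (2 * π * (s + t)) ^ (-(Module.finrank ℝ E : ℝ) / 2) := by
    rw [neg_div, rpow_neg_eq_inv_rpow, rpow_neg_eq_inv_rpow, rpow_neg_eq_inv_rpow,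
      ← mul_rpow (by positivity) (by positivity), ← mul_rpow (by positivity) (by positivity)]
    congr 1
    field_simp
  have hconst_nonneg : 0 ≤ (2 * π * s) ^ (-(Module.finrank ℝ E : ℝ) / 2) *
      (2 * π * t) ^ (-(Module.finrank ℝ E : ℝ) / 2) * exp (-‖w‖ ^ 2 / (2 * (s + t))) := by
    positivity
  simp_rw [← ENNReal.ofReal_mul (heatKernel_nonneg hs.le _), heatKernel_mul_heatKernel_sub hs ht,
    ENNReal.ofReal_mul hconst_nonneg]
  rw [lintegral_const_mul _ (by fun_prop), lintegral_sub_right_eq_self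
      (fun u : E => ENNReal.ofReal (exp (-((s + t) / (2 * s * t)) * ‖u‖ ^ 2))),
    lintegral_exp_neg_mul_sq_norm (by positivity), ← ENNReal.ofReal_mul (by positivity),
    mul_right_comm, hconst, heatKernel]

end HeatKernel

section PinnedChain

lemma lintegral_eq_lintegral_lintegral_fin_cons {E : Type*} [MeasureSpace E]
    [SigmaFinite (volume : Measure E)] {n : ℕ} {f : (Fin (n + 1) → E) → ℝ≥0∞}
    (hf : Measurable f) :
    ∫⁻ v, f v = ∫⁻ u, ∫⁻ w : Fin n → E, f (Fin.cons u w) := by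
  have hsplit := (volume_preserving_piFinSuccAbove (fun _ : Fin (n + 1) => E) 0).symm
  rw [← hsplit.lintegral_comp hf, Measure.volume_eq_prod,
    lintegral_prod _ (by exact (hf.comp hsplit.measurable).aemeasurable)]
  simp [MeasurableEquiv.piFinSuccAbove, Fin.insertNthEquiv]

variable {d N : ℕ}

/-- The increments of the chain `x, vs 0, …, vs (N - 1), y`. -/
def pinStep (x y : Ed d) (vs : Fin N → Ed d) (i : Fin (N + 1)) : Ed d :=
  pinPts x y vs (i + 1) - pinPts x y vs i

lemma pinPts_cons_succ (x y u : Ed d) (vs : Fin N → Ed d) (j : ℕ) :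
    pinPts x y (Fin.cons u vs : Fin (N + 1) → Ed d) (j + 1) = pinPts u y vs j := by
  rcases j with _ | j
  · simp [pinPts]
  · by_cases hj : j + 1 ≤ N
    · simp only [pinPts, hj, Nat.add_le_add_right hj 1, dite_true, Nat.add_eq_zero_iff,
        one_ne_zero, and_false, dite_false]
      exact Fin.cons_succ (α := fun _ => Ed d) u vs ⟨j, by lia⟩
    · simp [pinPts, hj]

lemma pinStep_cons (x y u : Ed d) (vs : Fin N → Ed d) :
    pinStep x y (Fin.cons u vs : Fin (N + 1) → Ed d) = Fin.cons (u - x) (pinStep u y vs) := by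
  ext1 i
  cases i using Fin.cases <;> simp [pinStep, pinPts_cons_succ, pinPts_zero]

@[fun_prop]
lemma continuous_pinStep (x y : Ed d) (i : Fin (N + 1)) :
    Continuous fun vs : Fin N → Ed d => pinStep x y vs i := by
  unfold pinStep pinPts
  refine Continuous.sub ?_ ?_ <;> split_ifs <;> fun_prop

lemma lintegral_prod_heatKernel_pinStep_sub {s : ℝ} (hs : 0 < s) (x y : Ed d)
    (h : Fin (N + 1) → Ed d) :
    ∫⁻ vs, ∏ i, .ofReal (heatKernel s (pinStep x y vs i - h i)) =
      .ofReal (heatKernel (s * (N + 1)) (y - x - ∑ i, h i)) := by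
  have hk : Measurable (heatKernel s : Ed d → ℝ) := (continuous_heatKernel s).measurable
  induction N generalizing x with
  | zero =>
    rw [lintegral_unique]
    simp [pinStep, pinPts, volume_pi]
  | succ N ih =>
    have hinner (u : Ed d) : ∫⁻ vs : Fin N → Ed d, ∏ i, ENNReal.ofReal
          (heatKernel s (pinStep x y (Fin.cons u vs : Fin (N + 1) → Ed d) i - h i)) =
        .ofReal (heatKernel s (u - (x + h 0))) *
          .ofReal (heatKernel (s * (N + 1)) (y - x - ∑ i, h i - (u - (x + h 0)))) := by
      simp_rw [pinStep_cons, Fin.prod_univ_succ (n := N + 1), Fin.cons_zero, Fin.cons_succ]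
      rw [lintegral_const_mul _ (by fun_prop), ih, sub_sub, Fin.sum_univ_succ (n := N + 1)]
      congr 3
      abel
    rw [lintegral_eq_lintegral_lintegral_fin_cons (by fun_prop)]
    simp_rw [hinner]
    rw [lintegral_sub_right_eq_self (fun u : Ed d => ENNReal.ofReal (heatKernel s u) *
        .ofReal (heatKernel (s * (N + 1)) (y - x - ∑ i, h i - u))),
      lintegral_heatKernel_mul_heatKernel_sub hs (by positivity)]
    push_cast
    congr 2
    ring

/-- The unnormalized law of the intermediate points of a Gaussian random walk with `N + 1` steps
of covariance `s • 1`, pinned at `x` and `y`. -/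
def pinMeasure (x y : Ed d) (s : ℝ) (N : ℕ) : Measure (Fin N → Ed d) :=
  volume.withDensity fun vs => ∏ i, .ofReal (heatKernel s (pinStep x y vs i))

lemma lintegral_exp_sum_inner_pinStep {s : ℝ} (hs : 0 < s) (x y : Ed d)
    (ξ : Fin (N + 1) → Ed d) :
    ∫⁻ vs, .ofReal (exp (∑ i, ⟪ξ i, pinStep x y vs i⟫)) ∂pinMeasure x y s N =
      .ofReal (exp (∑ i, s * ‖ξ i‖ ^ 2 / 2)) *
        .ofReal (heatKernel (s * (N + 1)) (y - x - ∑ i, s • ξ i)) := by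
  have hk : Measurable (heatKernel s : Ed d → ℝ) := (continuous_heatKernel s).measurable
  rw [pinMeasure, lintegral_withDensity_eq_lintegral_mul _ (by fun_prop) (by fun_prop),
    ← lintegral_prod_heatKernel_pinStep_sub hs, ← lintegral_const_mul _ (by fun_prop)]
  refine lintegral_congr fun vs => ?_
  simp_rw [Pi.mul_apply, exp_sum, ENNReal.ofReal_prod_of_nonneg fun _ _ => (exp_pos _).le,
    ← Finset.prod_mul_distrib, ← ENNReal.ofReal_mul (heatKernel_nonneg hs.le _),
    ← ENNReal.ofReal_mul (exp_pos _).le, heatKernel_mul_exp_inner hs]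

lemma pinMeasure_univ {s : ℝ} (hs : 0 < s) (x y : Ed d) (N : ℕ) :
    pinMeasure x y s N univ = .ofReal (heatKernel (s * (N + 1)) (y - x)) := by
  simpa using lintegral_exp_sum_inner_pinStep hs x y (0 : Fin (N + 1) → Ed d)

end PinnedChain

section PinnedPath

lemma clamp01_mono : Monotone clamp01 := fun _ _ h =>
  min_le_min_left 1 (max_le_max_left 0 h)

lemma clamp01_mem_Icc (r : ℝ) : clamp01 r ∈ Icc 0 1 :=
  ⟨le_min zero_le_one (le_max_left 0 r), min_le_left _ _⟩

lemma sum_clamp01_sub_natCast (N : ℕ) (r : ℝ) :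
    ∑ i : Fin N, clamp01 (r - (i : ℕ)) = min (N : ℝ) (max 0 r) := by
  rw [Fin.sum_univ_eq_sum_range fun i => clamp01 (r - (i : ℝ))]
  induction N with
  | zero => simp
  | succ N ih =>
    rw [Finset.sum_range_succ, ih, clamp01]
    push_cast
    grind

lemma sum_sq_clamp01_sub_le (N : ℕ) (r r' : ℝ) :
    ∑ i : Fin N, (clamp01 (r - (i : ℕ)) - clamp01 (r' - (i : ℕ))) ^ 2 ≤ |r - r'| := by
  wlog hr : r' ≤ r generalizing r r'
  · simpa only [abs_sub_comm, sub_sq_comm] using this r' r (le_of_not_ge hr)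
  calc ∑ i : Fin N, (clamp01 (r - (i : ℕ)) - clamp01 (r' - (i : ℕ))) ^ 2
      ≤ ∑ i : Fin N, (clamp01 (r - (i : ℕ)) - clamp01 (r' - (i : ℕ))) := by
        refine Finset.sum_le_sum fun i _ => ?_
        have hmono : clamp01 (r' - (i : ℕ)) ≤ clamp01 (r - (i : ℕ)) := clamp01_mono (by gcongr)
        have hnonneg := (clamp01_mem_Icc (r' - (i : ℕ))).1
        have hle_one := (clamp01_mem_Icc (r - (i : ℕ))).2
        exact pow_le_of_le_one (by linarith) (by linarith) two_ne_zero
    _ = min (N : ℝ) (max 0 r) - min (N : ℝ) (max 0 r') := by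
        rw [Finset.sum_sub_distrib, sum_clamp01_sub_natCast, sum_clamp01_sub_natCast]
    _ ≤ |r - r'| := by grind

variable {d N : ℕ} {s : ℝ}

/-- The piecewise linear path through the points `x, vs 0, …, vs (N - 1), y`. -/
def pinPath (x y : Ed d) (vs : Fin N → Ed d) : Omega2 x y :=
  pwLin2 x y (N + 1) (pinStep x y vs) (pin_telescope x y vs)

lemma pinPath_apply (x y : Ed d) (vs : Fin N → Ed d) (t : I) :
    (pinPath x y vs).1 t =
      x + ∑ i : Fin (N + 1), clamp01 ((N + 1) * t - (i : ℕ)) • pinStep x y vs i := by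
  simp [pinPath, pwLin2, pwLinE]

lemma continuous_pinPath (x y : Ed d) : Continuous (pinPath (N := N) x y) := by
  refine Continuous.subtype_mk (ContinuousMap.continuous_of_continuous_uncurry _ ?_) _
  refine continuous_const.add (continuous_finsetSum _ fun i _ => ?_)
  exact (clamp01_continuous.comp (by fun_prop)).smul (by fun_prop)

lemma lintegral_exp_inner_pinPath_sub_le (hs : 0 < s) (x y : Ed d) (N : ℕ) (t u : I) (ξ : Ed d) :
    ∫⁻ vs : Fin N → Ed d, .ofReal (exp ⟪ξ, (pinPath x y vs).1 t - (pinPath x y vs).1 u⟫)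
        ∂pinMeasure x y s N ≤
      .ofReal ((2 * π * (s * (N + 1))) ^ (-(d : ℝ) / 2)) *
        .ofReal (exp (s * (N + 1) * dist t u * ‖ξ‖ ^ 2 / 2)) := by
  set c : Fin (N + 1) → ℝ := fun i =>
    clamp01 ((N + 1) * t - (i : ℕ)) - clamp01 ((N + 1) * u - (i : ℕ))
  have hinner (vs : Fin N → Ed d) : ⟪ξ, (pinPath x y vs).1 t - (pinPath x y vs).1 u⟫ =
      ∑ i, ⟪c i • ξ, pinStep x y vs i⟫ := by
    simp_rw [pinPath_apply, add_sub_add_left_eq_sub, ← Finset.sum_sub_distrib, ← sub_smul,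
      inner_sum, real_inner_smul_left, real_inner_smul_right, c]
  have hc : ∑ i, c i ^ 2 ≤ (N + 1) * dist t u := by
    refine (sum_sq_clamp01_sub_le (N + 1) _ _).trans_eq ?_
    rw [← mul_sub, abs_mul, abs_of_nonneg (by positivity), Subtype.dist_eq, Real.dist_eq]
  have hvar : ∑ i, s * ‖c i • ξ‖ ^ 2 / 2 ≤ s * (N + 1) * dist t u * ‖ξ‖ ^ 2 / 2 := by
    calc ∑ i, s * ‖c i • ξ‖ ^ 2 / 2 = s * ‖ξ‖ ^ 2 / 2 * ∑ i, c i ^ 2 := by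
          rw [Finset.mul_sum]
          refine Finset.sum_congr rfl fun i _ => ?_
          rw [norm_smul, mul_pow, Real.norm_eq_abs, sq_abs]
          ring
      _ ≤ s * ‖ξ‖ ^ 2 / 2 * ((N + 1) * dist t u) := by gcongr
      _ = s * (N + 1) * dist t u * ‖ξ‖ ^ 2 / 2 := by ring
  simp_rw [hinner]
  rw [lintegral_exp_sum_inner_pinStep hs, mul_comm]
  gcongr
  simpa using heatKernel_le (show 0 ≤ s * (N + 1) by positivity) (y - x - ∑ i, s • c i • ξ)

lemma lintegral_edist_pinPath_pow_four_le (hs : 0 < s) (x y : Ed d) (N : ℕ) (t u : I) :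
    ∫⁻ vs : Fin N → Ed d, edist ((pinPath x y vs).1 t) ((pinPath x y vs).1 u) ^ 4
        ∂pinMeasure x y s N ≤
      .ofReal (48 * exp (1 / 2) * d ^ 2 * (s * (N + 1)) ^ 2 *
        (2 * π * (s * (N + 1))) ^ (-(d : ℝ) / 2)) * edist t u ^ 2 := by
  rcases eq_or_ne t u with rfl | htu
  · simp
  have hmeas (t : I) : Continuous fun vs : Fin N → Ed d => (pinPath x y vs).1 t :=
    (continuous_eval_const t).comp (continuous_subtype_val.comp (continuous_pinPath x y))
  have hdist : 0 < dist t u := dist_pos.2 htu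
  simp_rw [edist_eq_enorm_sub]
  refine (lintegral_enorm_pow_four_le ((hmeas t).sub (hmeas u)).aemeasurable (by positivity)
    (lintegral_exp_inner_pinPath_sub_le hs x y N t u)).trans_eq ?_
  rw [edist_dist, finrank_euclideanSpace_fin, ← ENNReal.ofReal_natCast,
    ← ENNReal.ofReal_pow (by positivity), ← ENNReal.ofReal_pow (by positivity),
    ← ENNReal.ofReal_mul (by positivity), ← ENNReal.ofReal_mul (by positivity),
    ← ENNReal.ofReal_mul (by positivity)]
  congr 1
  ring

end PinnedPath

section TightnessOfPinnedPaths

open ProbabilityTheory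

variable {d : ℕ} {x y : Ed d}

lemma exists_forall_isKolmogorovProcess_map_pinPath (x y : Ed d) {T₀ T₁ : ℝ} (hT₀ : 0 < T₀) :
    ∃ M, ∀ (s : ℝ) (N : ℕ), 0 < s → s * (N + 1) ∈ Icc T₀ T₁ →
      IsKolmogorovProcess (fun (t : I) (ω : PathSp d) => ω t)
        ((pinMeasure x y s N).map fun vs => (pinPath x y vs).1) 4 2 M := by
  refine ⟨(48 * exp (1 / 2) * d ^ 2 * T₁ ^ 2 * (2 * π * T₀) ^ (-(d : ℝ) / 2)).toNNReal,
    fun s N hs hsN => IsKolmogorovProcess.mk_of_secondCountableTopology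
      (fun t => (continuous_eval_const t).measurable) (fun t u => ?_) (by norm_num) (by norm_num)⟩
  have hcont : Continuous fun vs : Fin N → Ed d => (pinPath x y vs).1 :=
    continuous_subtype_val.comp (continuous_pinPath x y)
  have hrpow : (2 * π * (s * (N + 1))) ^ (-(d : ℝ) / 2) ≤ (2 * π * T₀) ^ (-(d : ℝ) / 2) := by
    refine rpow_le_rpow_of_nonpos (by positivity) (by gcongr; exact hsN.1) ?_
    rw [neg_div]
    exact neg_nonpos.2 (by positivity)
  simp_rw [ENNReal.rpow_ofNat]
  rw [lintegral_map (by fun_prop) hcont.measurable]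
  refine (lintegral_edist_pinPath_pow_four_le hs x y N t u).trans ?_
  gcongr
  exact ENNReal.ofReal_le_ofReal (by gcongr; exact hsN.2)

theorem isTightMeasureSet_map_pinPath {T₀ T₁ : ℝ} (hT₀ : 0 < T₀) :
    IsTightMeasureSet {μ : Measure (Omega2 x y) | ∃ (s : ℝ) (N : ℕ), 0 < s ∧
      s * (N + 1) ∈ Icc T₀ T₁ ∧ μ = (pinMeasure x y s N).map (pinPath x y)} := by
  have hclosed : IsClosed {ω : PathSp d | ω 0 = x ∧ ω 1 = y} :=
    (isClosed_eq (continuous_eval_const _) continuous_const).inter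
      (isClosed_eq (continuous_eval_const _) continuous_const)
  obtain ⟨M, hM⟩ := exists_forall_isKolmogorovProcess_map_pinPath x y (T₁ := T₁) hT₀
  refine isTightMeasureSet_of_map measurable_subtype_coe
    hclosed.isClosedEmbedding_subtypeVal.tendsto_cocompact
    (isTightMeasureSet_of_isKolmogorovProcess (p := 4) (q := 2) (M := M) (by norm_num)
      (by norm_num) (isTightMeasureSet_of_forall_ae_mem (isCompact_singleton (x := x)) ?_) ?_)
  · rintro _ ⟨_, ⟨μ, -, rfl⟩, rfl⟩
    have hzero : Measurable fun ω : PathSp d => ω 0 := (continuous_eval_const 0).measurable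
    rw [Measure.map_map hzero measurable_subtype_coe]
    exact (ae_map_iff (hzero.comp measurable_subtype_coe).aemeasurable
      (measurableSet_singleton x)).2 (ae_of_all _ fun ω => ω.2.1)
  · rintro _ ⟨_, ⟨s, N, hs, hsN, rfl⟩, rfl⟩
    rw [Measure.map_map measurable_subtype_coe (continuous_pinPath x y).measurable]
    exact hM s N hs hsN

lemma WxyaN_eq_map_pinPath (x y : Ed d) (a : ℝ) (N : ℕ) :
    WxyaN x y a N =
      (pinMeasure x y (a ^ 2) N).map fun vs => (a ^ 2 * (N + 1), pinPath x y vs) := by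
  unfold WxyaN pinMeasure
  congr
  ext vs
  rw [ENNReal.ofReal_prod_of_nonneg fun _ _ => by positivity]
  simp [heatKernel, pinStep]

lemma isTightMeasureSet_WxyaN_of_mem_Icc {T₀ T₁ : ℝ} (hT₀ : 0 < T₀) :
    IsTightMeasureSet {μ | ∃ (a : ℝ) (N : ℕ), 0 < a ∧ a ^ 2 * (N + 1) ∈ Icc T₀ T₁ ∧
      μ = WxyaN x y a N} := by
  refine IsTightMeasureSet.prodMk
    (isTightMeasureSet_of_forall_ae_mem (isCompact_Icc (a := T₀) (b := T₁)) ?_)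
    ((isTightMeasureSet_map_pinPath (T₁ := T₁) hT₀).subset ?_)
  · rintro _ ⟨_, ⟨a, N, -, hT, rfl⟩, rfl⟩
    rw [WxyaN_eq_map_pinPath, Measure.fst_map_prodMk (continuous_pinPath x y).measurable]
    exact (ae_map_iff aemeasurable_const measurableSet_Icc).2 (ae_of_all _ fun _ => hT)
  · rintro _ ⟨_, ⟨a, N, ha, hT, rfl⟩, rfl⟩
    refine ⟨a ^ 2, N, by positivity, hT, ?_⟩
    rw [WxyaN_eq_map_pinPath, Measure.snd_map_prodMk measurable_const]

lemma WxyaN_univ {a : ℝ} (ha : 0 < a) (x y : Ed d) (N : ℕ) :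
    WxyaN x y a N univ = .ofReal (heatKernel (a ^ 2 * (N + 1)) (y - x)) := by
  rw [WxyaN_eq_map_pinPath, Measure.map_apply
    (measurable_const.prodMk (continuous_pinPath x y).measurable) .univ, preimage_univ,
    pinMeasure_univ (by positivity)]

theorem isTightMeasureSet_WxyaN (hxy : x ≠ y) :
    IsTightMeasureSet {μ | ∃ (a : ℝ) (N : ℕ), 0 < a ∧ μ = WxyaN x y a N} := by
  have : Nontrivial (Ed d) := ⟨x, y, hxy⟩
  refine isTightMeasureSet_of_forall_exists_subset fun ε hε => ?_
  have hsmall {l : Filter ℝ} (hl : Tendsto (fun t => heatKernel t (y - x)) l (𝓝 0)) :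
      ∀ᶠ t in l, ENNReal.ofReal (heatKernel t (y - x)) ≤ ε :=
    (ENNReal.tendsto_ofReal hl).eventually_le_const (by simpa using hε)
  obtain ⟨T₀, hT₀, hT₀_small⟩ := mem_nhdsGT_iff_exists_Ioo_subset.1
    (hsmall (tendsto_heatKernel_nhdsGT_zero (sub_ne_zero.2 hxy.symm)))
  obtain ⟨T₁, hT₁_small⟩ := eventually_atTop.1 (hsmall (tendsto_heatKernel_atTop (y - x)))
  refine ⟨_, isTightMeasureSet_WxyaN_of_mem_Icc (T₀ := T₀) (T₁ := T₁) hT₀, ?_⟩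
  rintro _ ⟨a, N, ha, rfl⟩
  rw [WxyaN_univ ha]
  by_cases hT : a ^ 2 * (N + 1) ∈ Icc T₀ T₁
  · exact .inl ⟨a, N, ha, hT, rfl⟩
  · rcases lt_or_ge (a ^ 2 * (N + 1)) T₀ with hlt | hge
    · exact .inr (hT₀_small ⟨by positivity, hlt⟩)
    · exact .inr (hT₁_small _ (not_le.1 fun hle => hT ⟨hge, hle⟩).le)

end TightnessOfPinnedPaths

section Mixture

variable {d : ℕ} {x y : Ed d}

lemma tsum_one_sub_mul_pow_succ_le_one {r : ℝ≥0∞} (hr : r ≤ 1) :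
    ∑' n : ℕ, (1 - r) * r ^ (n + 1) ≤ 1 := by
  rw [ENNReal.tsum_mul_left, ENNReal.tsum_geometric_add_one]
  calc (1 - r) * (r * (1 - r)⁻¹) = r * ((1 - r) * (1 - r)⁻¹) := by ring
    _ ≤ 1 := mul_le_one' hr (ENNReal.mul_inv_le_one _)

lemma Wxya_eq_sum (x y : Ed d) (m a : ℝ) :
    Wxya x y m a = Measure.sum fun N : ℕ =>
      ((1 - ENNReal.ofReal (exp (-m ^ 2 * a ^ 2 / 2))) *
        ENNReal.ofReal (exp (-m ^ 2 * a ^ 2 / 2)) ^ (N + 1)) • WxyaN x y a N := by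
  have hpow (N : ℕ) : exp (-m ^ 2 * a ^ 2 * (N + 1) / 2) =
      exp (-m ^ 2 * a ^ 2 / 2) ^ (N + 1) := by
    rw [← exp_nat_mul]
    push_cast
    ring_nf
  ext s hs
  simp_rw [Wxya, hpow, Measure.smul_apply, Measure.sum_apply _ hs, Measure.smul_apply,
    ENNReal.ofReal_sub _ (exp_nonneg _), ENNReal.ofReal_one, ENNReal.ofReal_pow (exp_nonneg _),
    smul_eq_mul, mul_assoc, ENNReal.tsum_mul_left]

end Mixture

theorem Wxya_tight_general {d : ℕ} {x y : Ed d} (hxy : x ≠ y) :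
    IsTightMeasureSet {μ | ∃ m a : ℝ, 0 < a ∧ μ = Wxya x y m a} := by
  refine (isTightMeasureSet_countable_mixtures (ι := ℕ) (isTightMeasureSet_WxyaN hxy)).subset ?_
  rintro _ ⟨m, a, ha, rfl⟩
  have hr : ENNReal.ofReal (exp (-m ^ 2 * a ^ 2 / 2)) ≤ 1 :=
    ENNReal.ofReal_le_one.2 <| exp_le_one_iff.2 <| by nlinarith [sq_nonneg (m * a)]
  exact ⟨_, WxyaN x y a, tsum_one_sub_mul_pow_succ_le_one hr, fun N => ⟨a, N, ha, rfl⟩,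
    Wxya_eq_sum x y m a⟩

/-- **Lemma 4.3**: the family `{W_{x,y,a} : 0 < a < 1}` of finite measures on
`Γ̃(x,y) = [0,∞) × Ω(x,y)` is tight, for `x ≠ y`. -/
theorem Wxya_tight (d : ℕ) (hd : 1 ≤ d) (m : ℝ) (hm : 0 < m)
    (x y : Ed d) (hxy : x ≠ y) :
    ∀ η : ℝ, 0 < η → ∃ K : Set (ℝ × Omega2 x y), IsCompact K ∧
      ∀ a : ℝ, 0 < a → a < 1 → Wxya x y m a Kᶜ < ENNReal.ofReal η := by
  intro η hη
  obtain ⟨K, hK, hKη⟩ := isTightMeasureSet_iff_exists_isCompact_measure_compl_le.1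
    (Wxya_tight_general hxy) (.ofReal (η / 2)) (by simpa using hη)
  exact ⟨K, hK, fun a ha _ => (hKη _ ⟨m, a, ha, rfl⟩).trans_lt <|
    (ENNReal.ofReal_lt_ofReal_iff hη).2 (half_lt_self hη)⟩

end
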